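/- arXiv:2504.06424 — 9 statements merged into one kernel-verified Lean document; each statement's English description precedes it below -/
import Mathlib

section
/- Fix k ∈ ℕ, a topological system (X,T), and open sets U_1, …, U_k ⊆ X. If there exists a (k+1)-term Erdős progression (x_0, x_1, …, x_k) ∈ X^{k+1} with x_j ∈ U_j for j = 1, …, k, then there exists a strictly increasing sequence b : ℕ → ℕ such that for every m with 1 ≤ m ≤ k and all indices i_1 < i_2 < ⋯ < i_m in ℕ, we have T^{b(i_1)+⋯+b(i_m)} x_0 ∈ U_m. -/
/-!
The sequence `b` is chosen greedily among the times `c n` of the progression. The invariant kept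
for the finite set `F` of times chosen so far is stronger than the conclusion: for every `S ⊆ F`
and every `j` with `1 ≤ |S| + j ≤ k`, the point `T^(∑ S) (x j)` lies in `U (|S| + j)`.
For `F = ∅` this says `x j ∈ U j`. A new time `t = c n` with `n` large can always be added, since
`T^(∑ S) (T^t (x j))` is close to `T^(∑ S) (x (j + 1))`, which lies in the open set
`U (|S| + j + 1)`. The case `j = 0` of the invariant is the conclusion.
-/

open Filter Topology

/-- `(x 0, x 1, …, x k)` is a `(k+1)`-term Erdős progression for the system `(X,T)`:
there is a strictly increasing sequence `c : ℕ → ℕ` with `T^[c n] (x i) → x (i+1)`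
for each `i = 0, …, k-1`. -/
def IsErdosProgression {X : Type*} [TopologicalSpace X] (T : X → X) (k : ℕ)
    (x : ℕ → X) : Prop :=
  ∃ c : ℕ → ℕ, StrictMono c ∧
    ∀ i < k, Tendsto (fun n => T^[c n] (x i)) atTop (𝓝 (x (i + 1)))

/-- The finite set `F` of times is good: shifting `x j` by the sum of any `S ⊆ F` lands in
`U (|S| + j)`, whenever that index is in `{1, …, k}`. -/
def GoodTimes {X : Type*} (T : X → X) (k : ℕ) (U : ℕ → Set X) (x : ℕ → X) (F : Finset ℕ) : Prop :=
  ∀ S ⊆ F, ∀ j, 1 ≤ S.card + j → S.card + j ≤ k → T^[∑ s ∈ S, s] (x j) ∈ U (S.card + j)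

lemma GoodTimes.exists_insert {X : Type*} [TopologicalSpace X] {T : X → X} (hT : Continuous T)
    {k : ℕ} {U : ℕ → Set X} (hU : ∀ m, 1 ≤ m → m ≤ k → IsOpen (U m)) {x : ℕ → X}
    (hx : IsErdosProgression T k x) {F : Finset ℕ} (hF : GoodTimes T k U x F) :
    ∃ t, (∀ s ∈ F, s < t) ∧ GoodTimes T k U x (insert t F) := by
  obtain ⟨c, hc, hlim⟩ := hx
  have hlarge : ∀ᶠ n in atTop, ∀ s ∈ F, s < c n :=
    (Finset.eventually_all F).2 fun s _ => hc.tendsto_atTop.eventually_gt_atTop s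
  have hmem : ∀ᶠ n in atTop, ∀ S ∈ F.powerset, ∀ j ∈ Finset.range k, S.card + (j + 1) ≤ k →
      T^[∑ s ∈ S, s] (T^[c n] (x j)) ∈ U (S.card + (j + 1)) := by
    refine (Finset.eventually_all _).2 fun S hS => (Finset.eventually_all _).2 fun j hj => ?_
    by_cases hk : S.card + (j + 1) ≤ k
    · have hy := hF S (Finset.mem_powerset.1 hS) (j + 1) (by omega) hk
      have hlim' := ((hT.iterate (∑ s ∈ S, s)).tendsto (x (j + 1))).comp
        (hlim j (Finset.mem_range.1 hj))
      filter_upwards [hlim'.eventually ((hU _ (by omega) hk).mem_nhds hy)] with n hn _ using hn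
    · exact Eventually.of_forall fun n h => absurd h hk
  obtain ⟨n, hn, hm⟩ := (hlarge.and hmem).exists
  refine ⟨c n, hn, fun S hS j h1 hk => ?_⟩
  by_cases ht : c n ∈ S
  · have hS' : S.erase (c n) ⊆ F := Finset.subset_insert_iff.1 hS
    have hcard : (S.erase (c n)).card + 1 = S.card := Finset.card_erase_add_one ht
    have hidx : (S.erase (c n)).card + (j + 1) = S.card + j := by omega
    have := hm _ (Finset.mem_powerset.2 hS') j (Finset.mem_range.2 (by omega)) (by omega)
    rwa [hidx, ← Function.iterate_add_apply, Finset.sum_erase_add _ _ ht] at this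
  · exact hF S ((Finset.subset_insert_iff_of_notMem ht).1 hS) j h1 hk

theorem erdos_progressions_give_sumsets
    {X : Type*} [MetricSpace X] [CompactSpace X]
    (T : X → X) (hT : IsHomeomorph T) (k : ℕ)
    (U : ℕ → Set X) (hU : ∀ m, 1 ≤ m → m ≤ k → IsOpen (U m))
    (x : ℕ → X) (hx : IsErdosProgression T k x)
    (hxU : ∀ j, 1 ≤ j → j ≤ k → x j ∈ U j) :
    ∃ b : ℕ → ℕ, StrictMono b ∧
      ∀ m : ℕ, 1 ≤ m → m ≤ k → ∀ i : Fin m → ℕ, StrictMono i →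
        T^[∑ j, b (i j)] (x 0) ∈ U m := by
  have hstep : ∀ F : {F // GoodTimes T k U x F},
      ∃ t, (∀ s ∈ F.1, s < t) ∧ GoodTimes T k U x (insert t F.1) :=
    fun F => F.2.exists_insert hT.continuous hU hx
  choose t ht hgood using hstep
  have hempty : GoodTimes T k U x ∅ := by
    intro S hS j h1 hk
    obtain rfl := Finset.subset_empty.1 hS
    simpa using hxU j (by simpa using h1) (by simpa using hk)
  let F : ℕ → {F // GoodTimes T k U x F} := fun n =>
    Nat.rec ⟨∅, hempty⟩ (fun _ G => ⟨insert (t G) G.1, hgood G⟩) n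
  have hFsucc : ∀ n, (F (n + 1)).1 = insert (t (F n)) (F n).1 := fun n => rfl
  have hFmono : Monotone fun n => (F n).1 :=
    monotone_nat_of_le_succ fun n => by rw [hFsucc]; exact Finset.subset_insert _ _
  have hmem : ∀ {n N}, n < N → t (F n) ∈ (F N).1 := fun {n N} h =>
    hFmono (Nat.succ_le_of_lt h) (by
      change t (F n) ∈ (F (n + 1)).1
      rw [hFsucc]
      exact Finset.mem_insert_self _ _)
  have hb : StrictMono fun n => t (F n) := fun _ _ h => ht _ _ (hmem h)
  refine ⟨fun n => t (F n), hb, fun m h1 hk i hi => ?_⟩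
  have hinj : Function.Injective fun j => t (F (i j)) := (hb.comp hi).injective
  have hcard : (Finset.univ.image fun j => t (F (i j))).card = m := by
    rw [Finset.card_image_of_injective _ hinj, Finset.card_fin]
  have hsub : (Finset.univ.image fun j => t (F (i j))) ⊆ (F (∑ j, i j + 1)).1 := by
    intro s hs
    obtain ⟨j, -, rfl⟩ := Finset.mem_image.1 hs
    exact hmem (Nat.lt_succ_of_le
      (Finset.single_le_sum (f := i) (fun _ _ => Nat.zero_le _) (Finset.mem_univ j)))
  have := (F (∑ j, i j + 1)).2 _ hsub 0 (by omega) (by omega)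
  rwa [hcard, Finset.sum_image hinj.injOn] at this
end

section
/- Given a set A ⊆ ℕ with positive upper Banach density, there exist a compact metric space X, a homeomorphism T : X → X, a T-invariant Borel probability measure μ on X, a point a ∈ X with μ(closure{T^n a : n ∈ ℕ}) = 1, and an open set E ⊆ X with μ(E) > 0 such that A = {n ∈ ℕ : T^n a ∈ E}. -/
/-!
The proof is Furstenberg's: let `X = {0,1}^ℤ` with the shift `T`, let `a` be the indicator sequence
of `A` (extended by `0` to negative indices), and let `E = {x | x 0 = 1}`, which is clopen; then
`T^n a ∈ E` iff `n ∈ A`.  Positive density gives, for all large `N`, an interval `(M_N, M_N + N]` on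
which `A` has relative density at least `d / 2`.  The measure `μ` is a weak limit, along an
ultrafilter, of the uniform measures on the orbit segments `T^n a`, `n ∈ (M_N, M_N + N]`; it exists
because the probability measures on a compact metric space form a compact space.

The limit is invariant because integrals of `f ∘ T` and `f` over a segment of length `N` telescope to
a difference of size `O(1 / N)` (`exists_invariant_limit`).  A lower bound for the mass that the
approximating measures give to a closed set passes to the limit, by the portmanteau theorem; it is
applied to the closure of the forward orbit, of mass `1`, and to the closed set `E`, of mass at least
`d / 2`.
-/

open MeasureTheory Filter Topology

/-- `A ⊆ ℕ` has positive upper Banach density: the limit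
`lim_N sup_M |A ∩ {M+1,…,M+N}|/N` exists and is positive. -/
def HasPosUpperBanachDensity (A : Set ℕ) : Prop :=
  ∃ d : ℝ, 0 < d ∧
    Tendsto (fun N : ℕ => ⨆ M : ℕ, ((A ∩ Set.Ioc M (M + N)).ncard : ℝ) / N)
      atTop (𝓝 d)

open scoped ENNReal

/-- The uniform probability measure on the orbit segment `T^i a`, `i ∈ (m, m + n]`, with points
counted with multiplicity.  It is the zero measure for `n = 0`. -/
noncomputable def orbitMeasure {X : Type*} [MeasurableSpace X] (T : X → X) (a : X) (m n : ℕ) :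
    Measure X :=
  (n : ℝ≥0∞)⁻¹ • ∑ i ∈ Finset.Ioc m (m + n), Measure.dirac (T^[i] a)

lemma isProbabilityMeasure_orbitMeasure {X : Type*} [MeasurableSpace X] (T : X → X) (a : X) (m n : ℕ)
    (hn : n ≠ 0) : IsProbabilityMeasure (orbitMeasure T a m n) := by
  constructor
  simp [orbitMeasure, ENNReal.inv_mul_cancel, hn]

lemma orbitMeasure_apply {X : Type*} [MeasurableSpace X] (T : X → X) (a : X) (m n : ℕ)
    {S : Set X} (hS : MeasurableSet S) :
    orbitMeasure T a m n S
      = (n : ℝ≥0∞)⁻¹ * (({i | T^[i] a ∈ S} ∩ Set.Ioc m (m + n)).ncard : ℝ≥0∞) := by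
  classical
  have h : ({i | T^[i] a ∈ S} ∩ Set.Ioc m (m + n))
      = ((Finset.Ioc m (m + n)).filter (fun i => T^[i] a ∈ S) : Set ℕ) := by
    ext i; simp [and_comm]
  rw [h, Set.ncard_coe_finset]
  simp [orbitMeasure, hS, Set.indicator_apply, Finset.sum_boole]

lemma integral_orbitMeasure {X : Type*} [TopologicalSpace X] [MeasurableSpace X] [BorelSpace X]
    (T : X → X) (a : X) (m n : ℕ) (f : BoundedContinuousFunction X ℝ) :
    ∫ x, f x ∂(orbitMeasure T a m n)
      = (n : ℝ)⁻¹ * ∑ i ∈ Finset.Ioc m (m + n), f (T^[i] a) := by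
  rw [orbitMeasure, integral_smul_measure, integral_finsetSum_measure]
  · simp [integral_dirac' _ _ f.continuous.stronglyMeasurable]
  · intro i _
    exact f.integrable _

/-- Averaging `f ∘ T` rather than `f` along an orbit segment only changes the two end terms. -/
lemma abs_integral_comp_sub_le {X : Type*} [TopologicalSpace X] [MeasurableSpace X] [BorelSpace X]
    {T : X → X} (hT : Continuous T) (a : X) (m n : ℕ) (f : BoundedContinuousFunction X ℝ) :
    |∫ x, f (T x) ∂(orbitMeasure T a m n) - ∫ x, f x ∂(orbitMeasure T a m n)|
      ≤ (n : ℝ)⁻¹ * (2 * ‖f‖) := by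
  have h1 := integral_orbitMeasure T a m n (f.compContinuous ⟨T, hT⟩)
  simp only [BoundedContinuousFunction.compContinuous_apply, ContinuousMap.coe_mk] at h1
  rw [h1, integral_orbitMeasure, ← mul_sub, ← Finset.sum_sub_distrib]
  have h2 : ∑ i ∈ Finset.Ioc m (m + n), (f (T (T^[i] a)) - f (T^[i] a))
      = f (T^[m + n + 1] a) - f (T^[m + 1] a) := by
    clear h1
    induction n with
    | zero => simp
    | succ k ih =>
      rw [← add_assoc, Finset.sum_Ioc_succ_top (by omega), ih,
        Function.iterate_succ_apply' T (m + k + 1)]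
      ring
  rw [h2, abs_mul, abs_of_nonneg (by positivity : (0 : ℝ) ≤ (n : ℝ)⁻¹)]
  gcongr
  rw [← Real.norm_eq_abs]
  calc _ ≤ ‖f (T^[m + n + 1] a)‖ + ‖f (T^[m + 1] a)‖ := norm_sub_le _ _
    _ ≤ ‖f‖ + ‖f‖ := add_le_add (f.norm_coe_le_norm _) (f.norm_coe_le_norm _)
    _ = _ := by ring

/-- Krylov–Bogolyubov along arbitrary orbit segments of growing length: some weak limit point is
invariant, and lower bounds for the mass of closed sets pass to it. -/
lemma exists_invariant_limit {X : Type*} [MetricSpace X] [CompactSpace X] [MeasurableSpace X]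
    [BorelSpace X] {T : X → X} (hT : Continuous T) (a : X) (m : ℕ → ℕ) :
    ∃ μ : Measure X, IsProbabilityMeasure μ ∧ MeasurePreserving T μ μ ∧
      ∀ (C : Set X) (c : ℝ≥0∞), IsClosed C →
        (∀ᶠ N in atTop, c ≤ orbitMeasure T a (m N) N C) → c ≤ μ C := by
  -- The index is shifted by one, so that every segment is nonempty.
  let ν : ℕ → ProbabilityMeasure X := fun N =>
    ⟨orbitMeasure T a (m (N + 1)) (N + 1),
      isProbabilityMeasure_orbitMeasure T a _ _ (Nat.succ_ne_zero N)⟩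
  have hU : (hyperfilter ℕ : Filter ℕ) ≤ atTop := by
    rw [← Nat.cofinite_eq_atTop]; exact hyperfilter_le_cofinite
  obtain ⟨μ, -, hμ⟩ := isCompact_univ.ultrafilter_le_nhds ((hyperfilter ℕ).map ν) (by simp)
  have hlim : Tendsto ν (hyperfilter ℕ : Filter ℕ) (𝓝 μ) := hμ
  have hint := ProbabilityMeasure.tendsto_iff_forall_integral_tendsto.1 hlim
  refine ⟨μ, inferInstance, ⟨hT.measurable, ?_⟩, ?_⟩
  · have : IsProbabilityMeasure (Measure.map T (μ : Measure X)) :=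
      Measure.isProbabilityMeasure_map hT.measurable.aemeasurable
    refine ext_of_forall_integral_eq_of_IsFiniteMeasure fun f => ?_
    rw [integral_map hT.measurable.aemeasurable f.continuous.aestronglyMeasurable]
    have h1 := (hint (f.compContinuous ⟨T, hT⟩)).sub (hint f)
    have h2 : Tendsto (fun N : ℕ => ((N + 1 : ℕ) : ℝ)⁻¹ * (2 * ‖f‖)) (hyperfilter ℕ : Filter ℕ)
        (𝓝 (0 * (2 * ‖f‖))) :=
      (((tendsto_inv_atTop_zero.comp tendsto_natCast_atTop_atTop).comp
        (tendsto_add_atTop_nat 1)).mul_const _).mono_left hU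
    rw [zero_mul] at h2
    have h3 := squeeze_zero_norm (fun N => (Real.norm_eq_abs _).trans_le <|
      abs_integral_comp_sub_le hT a (m (N + 1)) (N + 1) f) h2
    exact sub_eq_zero.1 (tendsto_nhds_unique h1 h3)
  · intro C c hC hc
    refine le_trans ?_ (ProbabilityMeasure.limsup_measure_closed_le_of_tendsto hlim hC)
    have hc' : ∀ᶠ N in (hyperfilter ℕ : Filter ℕ), c ≤ (ν N : Measure X) C :=
      hU ((tendsto_add_atTop_nat 1).eventually hc)
    exact le_limsup_of_frequently_le hc'.frequently

/-- Positive density produces, for each large `N`, an interval of length `N` on which `A` has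
relative density bounded below. -/
lemma HasPosUpperBanachDensity.exists_intervals {A : Set ℕ} (hA : HasPosUpperBanachDensity A) :
    ∃ (c : ℝ) (m : ℕ → ℕ), 0 < c ∧
      ∀ᶠ N in atTop, c ≤ ((A ∩ Set.Ioc (m N) (m N + N)).ncard : ℝ) / N := by
  obtain ⟨d, hd, hlim⟩ := hA
  have h : ∀ᶠ N : ℕ in atTop, ∃ M : ℕ, d / 2 ≤ ((A ∩ Set.Ioc M (M + N)).ncard : ℝ) / N := by
    filter_upwards [hlim.eventually (lt_mem_nhds (half_lt_self hd))] with N hN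
    obtain ⟨M, hM⟩ := exists_lt_of_lt_ciSup hN
    exact ⟨M, hM.le⟩
  classical
  refine ⟨d / 2, fun N => if h : ∃ M : ℕ, d / 2 ≤ ((A ∩ Set.Ioc M (M + N)).ncard : ℝ) / N
    then h.choose else 0, by positivity, ?_⟩
  filter_upwards [h] with N hN
  simp only [dif_pos hN]
  exact hN.choose_spec

/-- The two-sided shift on `{0,1}^ℤ`. -/
def shift : (ℤ → Bool) ≃ₜ (ℤ → Bool) where
  toFun x k := x (k + 1)
  invFun x k := x (k - 1)
  left_inv x := by ext k; simp
  right_inv x := by ext k; simp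
  continuous_toFun := by fun_prop
  continuous_invFun := by fun_prop

lemma shift_iterate_apply (n : ℕ) (x : ℤ → Bool) (k : ℤ) : shift^[n] x k = x (k + n) := by
  induction n generalizing x with
  | zero => simp
  | succ n ih =>
    rw [Function.iterate_succ_apply, ih]
    simp [shift, add_assoc]

theorem correspondence_principle (A : Set ℕ) (hA : HasPosUpperBanachDensity A) :
    ∃ (X : Type) (_ : MetricSpace X) (_ : CompactSpace X)
      (_ : MeasurableSpace X), BorelSpace X ∧
      ∃ (T : X → X) (μ : Measure X) (a : X) (E : Set X),
        IsHomeomorph T ∧ IsProbabilityMeasure μ ∧ MeasurePreserving T μ μ ∧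
        μ (closure (Set.range fun n : ℕ => T^[n] a)) = 1 ∧
        IsOpen E ∧ 0 < μ E ∧ A = {n : ℕ | T^[n] a ∈ E} := by
  classical
  obtain ⟨c, m, hc, hm⟩ := hA.exists_intervals
  let _ : MetricSpace (ℤ → Bool) := TopologicalSpace.metrizableSpaceMetric (ℤ → Bool)
  let a : ℤ → Bool := fun k => decide (k.toNat ∈ A ∧ 0 ≤ k)
  let E : Set (ℤ → Bool) := {x | x 0 = true}
  have hE : IsClopen E := (isClopen_discrete {true}).preimage (continuous_apply (0 : ℤ))
  have hAE : A = {n : ℕ | shift^[n] a ∈ E} := by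
    ext n
    simp [E, shift_iterate_apply, a]
  obtain ⟨μ, hμ, hinv, hclosed⟩ := exists_invariant_limit shift.continuous a m
  refine ⟨ℤ → Bool, inferInstance, inferInstance, inferInstance, inferInstance, shift, μ, a, E,
    shift.isHomeomorph, hμ, hinv, ?_, hE.isOpen, ?_, hAE⟩
  · refine le_antisymm prob_le_one (hclosed _ _ isClosed_closure ?_)
    filter_upwards [eventually_ne_atTop 0] with N hN
    have := isProbabilityMeasure_orbitMeasure shift a (m N) N hN
    have h : {i | shift^[i] a ∈ closure (Set.range fun n : ℕ => shift^[n] a)}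
        = {i | shift^[i] a ∈ Set.univ} := by
      ext i
      simpa using subset_closure (Set.mem_range_self (f := fun n : ℕ => shift^[n] a) i)
    rw [orbitMeasure_apply _ _ _ _ isClosed_closure.measurableSet, h,
      ← orbitMeasure_apply _ _ _ _ MeasurableSet.univ, measure_univ]
  · refine lt_of_lt_of_le (ENNReal.ofReal_pos.2 hc) (hclosed E _ hE.isClosed ?_)
    filter_upwards [hm, eventually_ne_atTop 0] with N hN hN0
    rw [orbitMeasure_apply _ _ _ _ hE.isOpen.measurableSet, ← hAE]
    refine (ENNReal.ofReal_le_ofReal hN).trans_eq ?_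
    rw [ENNReal.ofReal_div_of_pos (by positivity), ENNReal.ofReal_natCast, ENNReal.ofReal_natCast,
      ENNReal.div_eq_inv_mul]
end

section
/- Fix k ∈ ℕ and a topological system (X,T). Let a ∈ X, let U_1, …, U_k ⊆ X be open sets, and let τ be a progressive Borel probability measure on X^{k+1} satisfying τ({a} × X^k) = 1. If τ(X × U_1 × ⋯ × U_k) > 0, then there is a (k+1)-term Erdős progression (a, x_1, …, x_k) with x_j ∈ U_j for all 1 ≤ j ≤ k. -/
/-!
The progression is found as the intersection of a nested sequence of balls in `X^{k+1}`.

Call a point `p` of `X^{k+1}` good if it lies in the support of `τ` and `p 0 = a`; almost every point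
is good, so every set of positive measure contains a good point. Given a ball `B(p, r)` around a
good point, progressiveness applied to the sides of the ball yields an arbitrarily large `n` and a
good point `p'` in the ball with `T^n (p' i)` within `r` of `p (i+1)` for all `i < k`; by continuity
this persists on a small closed ball around `p'` inside `B(p, r)` (`exists_step`). Iterating with
radii tending to `0`, the common point `y` of the balls satisfies
`dist (T^{c n} (y i)) (y (i+1)) < 2 r_n`, hence is an Erdős progression starting at `a`.
-/

open MeasureTheory Filter Topology

/-- A measure `τ` on `X^{k+1}` is progressive: whenever `U 1, …, U k` are open with
`τ(X × U 1 × ⋯ × U k) > 0`, there are infinitely many `n` with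
`τ((X × U 1 × ⋯ × U k) ∩ T_Δ^{-n}(U 1 × ⋯ × U k × X)) > 0`. -/
def IsProgressive {X : Type*} [TopologicalSpace X] [MeasurableSpace X]
    (T : X → X) (k : ℕ) (τ : Measure (Fin (k + 1) → X)) : Prop :=
  ∀ U : ℕ → Set X, (∀ i, 1 ≤ i → i ≤ k → IsOpen (U i)) →
    0 < τ {x | ∀ i : Fin (k + 1), 1 ≤ (i : ℕ) → x i ∈ U i} →
    Set.Infinite {n : ℕ |
      0 < τ ({x | ∀ i : Fin (k + 1), 1 ≤ (i : ℕ) → x i ∈ U i} ∩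
        {x | ∀ i : Fin (k + 1), (i : ℕ) < k → T^[n] (x i) ∈ U ((i : ℕ) + 1)})}

/-- A set of positive measure contains a point of the support whose `0`-th coordinate is `a`. -/
lemma exists_good_point
    {X : Type*} [MetricSpace X] [CompactSpace X] [MeasurableSpace X] [BorelSpace X]
    {k : ℕ} {a : X} {τ : Measure (Fin (k + 1) → X)} [IsProbabilityMeasure τ]
    (hτa : τ {x | x 0 = a} = 1) {A : Set (Fin (k + 1) → X)} (hA : 0 < τ A) :
    ∃ p ∈ A, p ∈ τ.support ∧ p 0 = a := by
  have hm : MeasurableSet {x : Fin (k + 1) → X | x 0 = a} :=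
    (isClosed_eq (continuous_apply 0) continuous_const).measurableSet
  have h1 : ∀ᵐ x ∂τ, x 0 = a := (mem_ae_iff_prob_eq_one hm).2 hτa
  have h2 : ∀ᵐ x ∂τ, x ∈ τ.support := Measure.support_mem_ae
  by_contra! hne
  refine hA.ne' (measure_eq_zero_iff_ae_notMem.2 ?_)
  filter_upwards [h1, h2] with x hx1 hx2 hxA
  exact hne x hxA hx2 hx1

/-- One step of the nested construction: inside a ball around a good point there is a closed ball, of
at most half the radius, around another good point, such that some `T^n` with `n > N` maps the
`i`-th side of the smaller ball into the `(i+1)`-st side of the first one. -/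
lemma exists_step
    {X : Type*} [MetricSpace X] [CompactSpace X] [MeasurableSpace X] [BorelSpace X]
    {T : X → X} (hT : Continuous T) {k : ℕ} {a : X}
    {τ : Measure (Fin (k + 1) → X)} [IsProbabilityMeasure τ]
    (hτ : IsProgressive T k τ) (hτa : τ {x | x 0 = a} = 1)
    (p : Fin (k + 1) → X) (hp : p ∈ τ.support) (hpa : p 0 = a) (r : ℝ) (hr : 0 < r) (N : ℕ) :
    ∃ p' : Fin (k + 1) → X, ∃ r' : ℝ, ∃ n : ℕ, p' ∈ τ.support ∧ p' 0 = a ∧ 0 < r' ∧ r' ≤ r / 2 ∧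
      N < n ∧ Metric.closedBall p' r' ⊆ Metric.ball p r ∧
      ∀ y ∈ Metric.closedBall p' r', ∀ i : Fin (k + 1), (i : ℕ) < k →
        dist (T^[n] (y i)) (p (Fin.ofNat (k + 1) (i + 1))) < r := by
  have hball : 0 < τ (Metric.ball p r) :=
    (Measure.mem_support_iff_forall p).1 hp _ (Metric.ball_mem_nhds p hr)
  have hinf := hτ (fun j => Metric.ball (p (Fin.ofNat (k + 1) j)) r)
    (fun _ _ _ => Metric.isOpen_ball) (hball.trans_le (measure_mono fun x hx i _ => by
      have := (dist_pi_lt_iff hr).1 (Metric.mem_ball.1 hx) i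
      simpa using this))
  obtain ⟨n, hn, hNn⟩ := hinf.exists_gt N
  obtain ⟨p', ⟨hp1, hp2⟩, hps, hp0⟩ := exists_good_point hτa hn
  have hpp : p' ∈ Metric.ball p r := by
    refine Metric.mem_ball.2 ((dist_pi_lt_iff hr).2 fun i => ?_)
    by_cases hi : 1 ≤ (i : ℕ)
    · simpa using hp1 i hi
    · have : i = 0 := Fin.ext (by rw [Fin.val_zero]; omega)
      simpa [this, hp0, hpa] using hr
  have hev : ∀ᶠ y in 𝓝 p', y ∈ Metric.ball p r ∧ ∀ i : Fin (k + 1), (i : ℕ) < k →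
      dist (T^[n] (y i)) (p (Fin.ofNat (k + 1) (i + 1))) < r := by
    refine (Metric.isOpen_ball.eventually_mem hpp).and (eventually_all.2 fun i => ?_)
    refine eventually_imp_distrib_left.2 fun hi => ?_
    have hc : Continuous fun y : Fin (k + 1) → X =>
        dist (T^[n] (y i)) (p (Fin.ofNat (k + 1) (i + 1))) :=
      ((hT.iterate n).comp (continuous_apply i)).dist continuous_const
    exact hc.continuousAt.eventually_lt continuousAt_const (hp2 i hi)
  obtain ⟨ε, hε, hεs⟩ := Metric.nhds_basis_closedBall.eventually_iff.1 hev
  have hsub : ∀ y ∈ Metric.closedBall p' (min ε (r / 2)), y ∈ Metric.closedBall p' ε :=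
    fun y hy => Metric.closedBall_subset_closedBall (min_le_left _ _) hy
  exact ⟨p', min ε (r / 2), n, hps, hp0, lt_min hε (by linarith), min_le_right _ _, hNn,
    fun y hy => (hεs (hsub y hy)).1, fun y hy => (hεs (hsub y hy)).2⟩

theorem progressions_from_progressive
    {X : Type*} [MetricSpace X] [CompactSpace X] [MeasurableSpace X] [BorelSpace X]
    (T : X → X) (hT : IsHomeomorph T) (k : ℕ) (a : X)
    (U : ℕ → Set X) (hU : ∀ i, 1 ≤ i → i ≤ k → IsOpen (U i))
    (τ : Measure (Fin (k + 1) → X)) [IsProbabilityMeasure τ]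
    (hτ : IsProgressive T k τ)
    (hτa : τ {x | x 0 = a} = 1)
    (hτU : 0 < τ {x | ∀ i : Fin (k + 1), 1 ≤ (i : ℕ) → x i ∈ U i}) :
    ∃ x : ℕ → X, x 0 = a ∧ IsErdosProgression T k x ∧
      ∀ j, 1 ≤ j → j ≤ k → x j ∈ U j := by
  obtain ⟨p₀, hp₀U, hp₀s, hp₀a⟩ := exists_good_point hτa hτU
  have hev : ∀ᶠ y in 𝓝 p₀, ∀ i : Fin (k + 1), 1 ≤ (i : ℕ) → y i ∈ U i := by
    refine eventually_all.2 fun i => eventually_imp_distrib_left.2 fun hi => ?_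
    exact (continuous_apply i).continuousAt.eventually_mem
      ((hU i hi (Nat.le_of_lt_succ i.2)).mem_nhds (hp₀U i hi))
  obtain ⟨r₀, hr₀, hr₀U⟩ := Metric.nhds_basis_closedBall.eventually_iff.1 hev
  -- A state is a good centre, a positive radius and the last shift used.
  let S := {s : (Fin (k + 1) → X) × ℝ × ℕ // s.1 ∈ τ.support ∧ s.1 0 = a ∧ 0 < s.2.1}
  have hstep : ∀ s : S, ∃ s' : S, s'.1.2.1 ≤ s.1.2.1 / 2 ∧ s.1.2.2 < s'.1.2.2 ∧
      Metric.closedBall s'.1.1 s'.1.2.1 ⊆ Metric.ball s.1.1 s.1.2.1 ∧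
      ∀ y ∈ Metric.closedBall s'.1.1 s'.1.2.1, ∀ i : Fin (k + 1), (i : ℕ) < k →
        dist (T^[s'.1.2.2] (y i)) (s.1.1 (Fin.ofNat (k + 1) (i + 1))) < s.1.2.1 := by
    rintro ⟨⟨p, r, N⟩, hp, hpa, hr⟩
    obtain ⟨p', r', n, h1, h2, h3, h4, h5, h6, h7⟩ :=
      exists_step hT.continuous hτ hτa p hp hpa r hr N
    exact ⟨⟨⟨p', r', n⟩, h1, h2, h3⟩, h4, h5, h6, h7⟩
  choose f hfr hfc hfb hfT using hstep
  let s : ℕ → S := fun n => Nat.rec ⟨(p₀, r₀, 0), hp₀s, hp₀a, hr₀⟩ (fun _ t => f t) n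
  have hs : ∀ n, s (n + 1) = f (s n) := fun _ => rfl
  have hr : Tendsto (fun n => (s n).1.2.1) atTop (𝓝 0) := by
    have hle : ∀ n, (s n).1.2.1 ≤ r₀ * (1 / 2) ^ n := by
      intro n
      induction n with
      | zero => simp [s]
      | succ n ih =>
        have := hfr (s n)
        rw [hs, pow_succ]
        linarith
    refine squeeze_zero (fun n => (s n).2.2.2.le) hle ?_
    simpa using (tendsto_pow_atTop_nhds_zero_of_lt_one (r := (1 / 2 : ℝ))
      (by norm_num) (by norm_num)).const_mul r₀
  obtain ⟨y, hy⟩ : (⋂ n, Metric.closedBall (s n).1.1 (s n).1.2.1).Nonempty := by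
    refine IsCompact.nonempty_iInter_of_sequence_nonempty_isCompact_isClosed _ (fun n => ?_)
      (fun n => ?_) Metric.isClosed_closedBall.isCompact fun n => Metric.isClosed_closedBall
    · rw [hs]
      exact (hfb (s n)).trans Metric.ball_subset_closedBall
    · exact Metric.nonempty_closedBall.2 (s n).2.2.2.le
  rw [Set.mem_iInter] at hy
  have hyd : ∀ n i, dist (y i) ((s n).1.1 i) ≤ (s n).1.2.1 := fun n i =>
    (dist_le_pi_dist _ _ i).trans (Metric.mem_closedBall.1 (hy n))
  refine ⟨fun j => y (Fin.ofNat (k + 1) j), ?_, ⟨fun n => (s (n + 1)).1.2.2, ?_, ?_⟩, ?_⟩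
  · have h0 : dist (y 0) a ≤ 0 := ge_of_tendsto' hr fun n => by
      simpa [(s n).2.2.1] using hyd n 0
    simpa using dist_le_zero.1 h0
  · exact strictMono_nat_of_lt_succ fun n => hfc (s (n + 1))
  · intro i hi
    refine tendsto_iff_dist_tendsto_zero.2 ?_
    refine squeeze_zero (fun _ => dist_nonneg) (fun n => ?_) (by simpa using hr.add hr)
    have hiv : ((Fin.ofNat (k + 1) i : Fin (k + 1)) : ℕ) = i := by
      simp [Nat.mod_eq_of_lt (show i < k + 1 by omega)]
    have h1 := hfT (s n) y (hy (n + 1)) (Fin.ofNat (k + 1) i) (by rw [hiv]; exact hi)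
    rw [hiv] at h1
    exact (dist_triangle_right _ _ _).trans (add_le_add h1.le (hyd n _))
  · intro j hj hjk
    have hjv : ((Fin.ofNat (k + 1) j : Fin (k + 1)) : ℕ) = j := by
      simp [Nat.mod_eq_of_lt (show j < k + 1 by omega)]
    have := hr₀U (hy 0) (Fin.ofNat (k + 1) j) (by rw [hjv]; exact hj)
    rwa [hjv] at this
end

section
/- Fix k ∈ ℕ and a topological system (X,T). Let a ∈ X, let U_1, …, U_k ⊆ X be open sets, and let τ be a progressive Borel probability measure on X^{k+1} satisfying τ({a} × X^k) = 1 and τ(X × U_1 × ⋯ × U_k) > 0. Then there is a (k+1)-term Erdős progression (a, x_1, …, x_k) that lies in the support of τ and satisfies x_j ∈ U_j for all 1 ≤ j ≤ k. -/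
/-!
The point is obtained as the intersection of a nested sequence of closed balls `closedBall yₙ rₙ`
in `X^{k+1}` centred in the support of `τ`, with `rₙ → 0`.

Given `yₙ` in the support and `rₙ > 0`, progressivity applied to the coordinate balls of radius `rₙ`
about `yₙ` yields arbitrarily large times `m` for which the open set of points `x` near `yₙ` with
`T^m xᵢ` near `(yₙ)ᵢ₊₁` for all `i < k` has positive measure. This open set meets the support, and
`yₙ₊₁`, `rₙ₊₁` are chosen so that the next closed ball lies inside it
(`exists_next_ball`). Coordinate `0` plays no role in the nesting, because every point
of the support has zeroth coordinate `a`. The common point `x` of the balls satisfies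
`T^{c(n)} xᵢ → xᵢ₊₁`, and it lies in the support because the support is closed.
-/

open MeasureTheory Filter Topology

/-- A point belongs to the support of `τ` (the smallest closed set of full measure)
iff every open neighborhood of it has positive measure. -/
def MemSupport {Z : Type*} [TopologicalSpace Z] [MeasurableSpace Z]
    (τ : Measure Z) (z : Z) : Prop :=
  ∀ V : Set Z, IsOpen V → z ∈ V → 0 < τ V

section

variable {X : Type*} [MetricSpace X] [CompactSpace X] [MeasurableSpace X] [BorelSpace X]

lemma apply_zero_of_mem_support {k : ℕ} {a : X} {τ : Measure (Fin (k + 1) → X)}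
    [IsProbabilityMeasure τ] (hτa : τ {x | x 0 = a} = 1) {y : Fin (k + 1) → X}
    (hy : y ∈ τ.support) : y 0 = a := by
  have hcl : IsClosed {x : Fin (k + 1) → X | x 0 = a} :=
    isClosed_eq (continuous_apply 0) continuous_const
  refine Measure.support_subset_of_isClosed hcl ?_ hy
  exact (prob_compl_eq_zero_iff hcl.measurableSet).2 hτa

/-- The inductive step: inside the ball `ball y r` about a point of the support there is a smaller
closed ball, again centred in the support, all of whose points are shifted at some late time `m`
by `T` into the coordinate balls of `ball y r`, one index further on. -/
lemma exists_next_ball {T : X → X} (hT : Continuous T) {k : ℕ} {a : X}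
    {τ : Measure (Fin (k + 1) → X)} [IsProbabilityMeasure τ] (hτ : IsProgressive T k τ)
    (hτa : τ {x | x 0 = a} = 1) {y : Fin (k + 1) → X} (hy : y ∈ τ.support) {r : ℝ} (hr : 0 < r)
    (N : ℕ) :
    ∃ y' ∈ τ.support, ∃ r' > 0, ∃ m > N, r' ≤ r / 2 ∧
      Metric.closedBall y' r' ⊆ Metric.ball y r ∧
      ∀ x ∈ Metric.closedBall y' r', ∀ i : Fin (k + 1), (i : ℕ) < k →
        T^[m] (x i) ∈ Metric.ball (y (Fin.ofNat (k + 1) (i + 1))) r := by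
  let V : ℕ → Set X := fun i => Metric.ball (y (Fin.ofNat (k + 1) i)) r
  have hV : ∀ i, IsOpen (V i) := fun i => Metric.isOpen_ball
  have hpos : 0 < τ {x | ∀ i : Fin (k + 1), 1 ≤ (i : ℕ) → x i ∈ V i} := by
    have h1 : 0 < τ (Metric.ball y r) :=
      (Measure.mem_support_iff_forall y).1 hy _ (Metric.ball_mem_nhds y hr)
    refine h1.trans_le (measure_mono fun x hx i _ => ?_)
    have := (dist_le_pi_dist x y i).trans_lt hx
    simpa [V] using this
  obtain ⟨m, hm, hNm⟩ := (hτ V (fun i _ _ => hV i) hpos).exists_gt N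
  obtain ⟨y', ⟨hy'1, hy'2⟩, hy's⟩ := Measure.nonempty_inter_support_of_pos hm
  have hball : y' ∈ Metric.ball y r := by
    rw [Metric.mem_ball, dist_pi_lt_iff hr]
    intro i
    rcases Nat.eq_zero_or_pos (i : ℕ) with h0 | h0
    · obtain rfl : i = 0 := Fin.ext h0
      rw [apply_zero_of_mem_support hτa hy, apply_zero_of_mem_support hτa hy's, dist_self]
      exact hr
    · simpa [V] using hy'1 i h0
  have hopen : IsOpen {x : Fin (k + 1) → X | ∀ i : Fin (k + 1), (i : ℕ) < k →
      T^[m] (x i) ∈ V ((i : ℕ) + 1)} := by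
    simp only [Set.ofPred_forall]
    refine isOpen_iInter_of_finite fun i => isOpen_iInter_of_finite fun _ => ?_
    exact (hV _).preimage ((hT.iterate m).comp (continuous_apply i))
  obtain ⟨ε, hε, hsub⟩ := Metric.nhds_basis_closedBall.mem_iff.1
    ((Metric.isOpen_ball.inter hopen).mem_nhds ⟨hball, hy'2⟩)
  have hsub' := (Metric.closedBall_subset_closedBall (min_le_left ε (r / 2))).trans hsub
  exact ⟨y', hy's, min ε (r / 2), by positivity, m, hNm, min_le_right _ _,
    fun x hx => (hsub' hx).1, fun x hx => (hsub' hx).2⟩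

end

theorem progressions_from_progressive_in_support
    {X : Type*} [MetricSpace X] [CompactSpace X] [MeasurableSpace X] [BorelSpace X]
    (T : X → X) (hT : IsHomeomorph T) (k : ℕ) (a : X)
    (U : ℕ → Set X) (hU : ∀ i, 1 ≤ i → i ≤ k → IsOpen (U i))
    (τ : Measure (Fin (k + 1) → X)) [IsProbabilityMeasure τ]
    (hτ : IsProgressive T k τ)
    (hτa : τ {x | x 0 = a} = 1)
    (hτU : 0 < τ {x | ∀ i : Fin (k + 1), 1 ≤ (i : ℕ) → x i ∈ U i}) :
    ∃ x : ℕ → X, x 0 = a ∧ IsErdosProgression T k x ∧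
      MemSupport τ (fun i : Fin (k + 1) => x (i : ℕ)) ∧
      ∀ j, 1 ≤ j → j ≤ k → x j ∈ U j := by
  have hopen : IsOpen {x : Fin (k + 1) → X | ∀ i : Fin (k + 1), 1 ≤ (i : ℕ) → x i ∈ U i} := by
    simp only [Set.ofPred_forall]
    refine isOpen_iInter_of_finite fun i => isOpen_iInter_of_finite fun hi => ?_
    exact (hU i hi (Nat.le_of_lt_succ i.2)).preimage (continuous_apply i)
  obtain ⟨y₀, hy₀U, hy₀⟩ := Measure.nonempty_inter_support_of_pos hτU
  obtain ⟨r₀, hr₀, hsub₀⟩ := Metric.nhds_basis_closedBall.mem_iff.1 (hopen.mem_nhds hy₀U)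
  -- A state records a centre in the support, a radius, and the last time used.
  let S := {p : (Fin (k + 1) → X) × ℝ × ℕ // p.1 ∈ τ.support ∧ 0 < p.2.1}
  have hstep : ∀ s : S, ∃ s' : S, s.1.2.2 < s'.1.2.2 ∧ s'.1.2.1 ≤ s.1.2.1 / 2 ∧
      Metric.closedBall s'.1.1 s'.1.2.1 ⊆ Metric.ball s.1.1 s.1.2.1 ∧
      ∀ x ∈ Metric.closedBall s'.1.1 s'.1.2.1, ∀ i : Fin (k + 1), (i : ℕ) < k →
        T^[s'.1.2.2] (x i) ∈ Metric.ball (s.1.1 (Fin.ofNat (k + 1) (i + 1))) s.1.2.1 := by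
    rintro ⟨⟨y, r, N⟩, hy, hr⟩
    obtain ⟨y', hy', r', hr', m, hm, h1, h2, h3⟩ :=
      exists_next_ball hT.continuous hτ hτa hy hr N
    exact ⟨⟨⟨y', r', m⟩, hy', hr'⟩, hm, h1, h2, h3⟩
  choose f hf using hstep
  let s : ℕ → S := fun n => f^[n] ⟨⟨y₀, r₀, 0⟩, hy₀, hr₀⟩
  have hs : ∀ n, s (n + 1) = f (s n) := fun n => Function.iterate_succ_apply' f n _
  let y : ℕ → Fin (k + 1) → X := fun n => (s n).1.1
  let r : ℕ → ℝ := fun n => (s n).1.2.1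
  let c : ℕ → ℕ := fun n => (s (n + 1)).1.2.2
  have hy : ∀ n, y n ∈ τ.support := fun n => (s n).2.1
  have hr : ∀ n, 0 < r n := fun n => (s n).2.2
  have hc : StrictMono c := strictMono_nat_of_lt_succ fun n => by
    have := (hf (s (n + 1))).1
    rwa [← hs] at this
  have hrhalf : ∀ n, r (n + 1) ≤ r n / 2 := fun n => by
    have := (hf (s n)).2.1
    rwa [← hs] at this
  have hnest : ∀ n, Metric.closedBall (y (n + 1)) (r (n + 1)) ⊆ Metric.ball (y n) (r n) :=
    fun n => by
      have := (hf (s n)).2.2.1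
      rwa [← hs] at this
  have hshift : ∀ n, ∀ x ∈ Metric.closedBall (y (n + 1)) (r (n + 1)), ∀ i : Fin (k + 1),
      (i : ℕ) < k → T^[c n] (x i) ∈ Metric.ball (y n (Fin.ofNat (k + 1) (i + 1))) (r n) :=
    fun n => by
      have := (hf (s n)).2.2.2
      rwa [← hs] at this
  have hr0 : Tendsto r atTop (𝓝 0) := by
    have hle : ∀ n, r n ≤ r 0 * (1 / 2 : ℝ) ^ n := by
      intro n
      induction n with
      | zero => simp
      | succ n ih => rw [pow_succ]; linarith [hrhalf n]
    have hlim : Tendsto (fun n : ℕ => r 0 * (1 / 2 : ℝ) ^ n) atTop (𝓝 0) := by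
      simpa using (tendsto_pow_atTop_nhds_zero_of_lt_one (r := (1 / 2 : ℝ))
        (by norm_num) (by norm_num)).const_mul (r 0)
    exact squeeze_zero (fun n => (hr n).le) hle hlim
  obtain ⟨x, hx⟩ := IsCompact.nonempty_iInter_of_sequence_nonempty_isCompact_isClosed
    (fun n => Metric.closedBall (y n) (r n))
    (fun n => (hnest n).trans Metric.ball_subset_closedBall)
    (fun n => ⟨y n, Metric.mem_closedBall_self (hr n).le⟩)
    Metric.isClosed_closedBall.isCompact (fun n => Metric.isClosed_closedBall)
  rw [Set.mem_iInter] at hx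
  have hyx : Tendsto y atTop (𝓝 x) := by
    rw [tendsto_iff_dist_tendsto_zero]
    exact squeeze_zero (fun _ => dist_nonneg)
      (fun n => by rw [dist_comm]; exact hx n) hr0
  have hxs : x ∈ τ.support :=
    Measure.isClosed_support.mem_of_tendsto hyx (Eventually.of_forall hy)
  refine ⟨fun i => x (Fin.ofNat (k + 1) i), ?_, ⟨c, hc, fun i hi => ?_⟩, ?_, fun j hj hjk => ?_⟩
  · exact apply_zero_of_mem_support hτa hxs
  · have hcoord : ∀ n, dist (T^[c n] (x (Fin.ofNat (k + 1) i)))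
        (y n (Fin.ofNat (k + 1) (i + 1))) ≤ r n := fun n => by
      have hval : ((Fin.ofNat (k + 1) i : Fin (k + 1)) : ℕ) = i :=
        Nat.mod_eq_of_lt (by omega)
      have := hshift n x (hx (n + 1)) (Fin.ofNat (k + 1) i) (by rw [hval]; exact hi)
      rw [hval] at this
      exact (Metric.mem_ball.1 this).le
    rw [tendsto_iff_dist_tendsto_zero]
    refine squeeze_zero (fun _ => dist_nonneg) (fun n => ?_)
      (by simpa using hr0.add hr0 : Tendsto (fun n => r n + r n) atTop (𝓝 0))
    refine (dist_triangle _ (y n (Fin.ofNat (k + 1) (i + 1))) _).trans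
      (add_le_add (hcoord n) ?_)
    rw [dist_comm]
    exact (dist_le_pi_dist x (y n) _).trans (hx n)
  · intro V hV hxV
    have hxV' : x ∈ V := by simpa using hxV
    exact (Measure.mem_support_iff_forall x).1 hxs V (hV.mem_nhds hxV')
  · have hval : ((Fin.ofNat (k + 1) j : Fin (k + 1)) : ℕ) = j :=
      Nat.mod_eq_of_lt (by omega)
    have := hsub₀ (hx 0) (Fin.ofNat (k + 1) j) (by rw [hval]; exact hj)
    rwa [hval] at this
end

section
/- Let X = ℝ/ℤ, let α ∈ ℝ be irrational, and let T : X → X be the rotation T x = x + α (mod 1). For every k ∈ ℕ, a point (x_0, x_1, …, x_k) ∈ X^{k+1} is a (k+1)-term Erdős progression for (X,T) if and only if there exists β ∈ ℝ/ℤ such that x_i = x_0 + iβ for all i = 0, 1, …, k. -/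
/-!
Iterating the rotation gives `T^[n] y = y + n • α`, so `T^[c n] (x i) → x (i + 1)` says exactly that
`c n • α → x (i + 1) - x i`. Limits being unique, an Erdős progression has constant successive
differences. Conversely, since `α` is irrational its integer multiples are dense in the circle; in a
compact group every point of the closure of the integer multiples is a cluster point of the sequence
`n • α`, `n → +∞` (`mapClusterPt_atTop_nsmul_iff_mem_topologicalClosure_zmultiples`), so every `β`
is the limit of `c n • α` for some strictly increasing `c`.
-/

open Filter Topology

lemma iterate_add_const {G : Type*} [AddMonoid G] (a y : G) (n : ℕ) :
    (fun z => z + a)^[n] y = y + n • a := by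
  induction n with
  | zero => simp
  | succ n ih => rw [Function.iterate_succ_apply', ih, succ_nsmul, add_assoc]

lemma exists_strictMono_nsmul_tendsto (α : ℝ) (hα : Irrational α) (β : AddCircle (1 : ℝ)) :
    ∃ c : ℕ → ℕ, StrictMono c ∧
      Tendsto (fun n => c n • (α : AddCircle (1 : ℝ))) atTop (𝓝 β) := by
  have hd : DenseRange (fun m : ℤ => m • (α : AddCircle (1 : ℝ))) :=
    AddCircle.denseRange_zsmul_coe_iff.2 (by simpa using hα)
  have hc : MapClusterPt β atTop (fun n : ℕ => n • (α : AddCircle (1 : ℝ))) :=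
    mapClusterPt_atTop_nsmul_iff_mem_topologicalClosure_zmultiples.2 (hd β)
  exact hc.tendsto_subseq

theorem erdos_progression_iff_arithmetic_rotation
    (α : ℝ) (hα : Irrational α) (k : ℕ) (x : ℕ → AddCircle (1 : ℝ)) :
    IsErdosProgression (fun y => y + (α : AddCircle (1 : ℝ))) k x ↔
      ∃ β : AddCircle (1 : ℝ), ∀ i ≤ k, x i = x 0 + (i : ℕ) • β := by
  simp only [IsErdosProgression, iterate_add_const]
  constructor
  · rintro ⟨c, -, hc⟩
    have hdiff : ∀ i < k,
        Tendsto (fun n => c n • (α : AddCircle (1 : ℝ))) atTop (𝓝 (x (i + 1) - x i)) := by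
      intro i hi
      simpa using (hc i hi).sub_const (x i)
    -- For `k = 0` the value of `β` is irrelevant, so the same choice works.
    refine ⟨x 1 - x 0, fun i => ?_⟩
    induction i with
    | zero => simp
    | succ i ih =>
      intro hi
      have h := tendsto_nhds_unique (hdiff i (by omega)) (hdiff 0 (by omega))
      rw [zero_add] at h
      rw [succ_nsmul, ← add_assoc, ← ih (by omega), ← h, add_sub_cancel]
  · rintro ⟨β, hβ⟩
    obtain ⟨c, hc, hlim⟩ := exists_strictMono_nsmul_tendsto α hα β
    refine ⟨c, hc, fun i hi => ?_⟩
    rw [hβ (i + 1) hi, succ_nsmul, ← add_assoc, ← hβ i hi.le]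
    exact hlim.const_add (x i)
end

section
/- Let X = ℝ/ℤ, let α ∈ ℝ be irrational, let T : X → X be the rotation T x = x + α (mod 1), let k ∈ ℕ, and let a ∈ X. Let σ be the Borel probability measure on X^{k+1} obtained as the pushforward of the Haar (Lebesgue) measure on ℝ/ℤ under the map β ↦ (a, a+β, a+2β, …, a+kβ). Then σ is progressive. -/
/-!
The set of `β` with `a + iβ ∈ U i` for `1 ≤ i ≤ k` is open, and it is nonempty because it has positive
measure; fix such a `β₀`. The `γ` with `a + iβ₀ + γ ∈ U (i + 1)` for all `i < k` form a
neighbourhood of `β₀`, since `a + iβ₀ + β₀ = a + (i + 1)β₀`. As `α` is irrational, the sequence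
`n • α` clusters at `β₀`, so it visits this neighbourhood for infinitely many `n`. For each such `n`
the point `β₀` lies in the open set of `β` satisfying both families of conditions, and nonempty open
sets have positive Haar measure.
-/

open MeasureTheory Filter Topology

/-- Every point of the circle is a cluster point of the forward orbit `n • α`, not merely a limit of
two-sided multiples: in a compact group forward powers return near every two-sided power. -/
lemma mapClusterPt_nsmul_of_irrational {α : ℝ} (hα : Irrational α) (y : AddCircle (1 : ℝ)) :
    MapClusterPt y atTop (fun n : ℕ => n • (α : AddCircle (1 : ℝ))) := by
  have hdense : DenseRange (fun n : ℤ => n • (α : AddCircle (1 : ℝ))) :=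
    AddCircle.denseRange_zsmul_coe_iff.2 (by simpa using hα)
  exact ((mapClusterPt_atTop_nsmul_tfae y (α : AddCircle (1 : ℝ))).out 0 3).2 (hdense y)

theorem rotation_measure_progressive
    (α : ℝ) (hα : Irrational α) (k : ℕ) (a : AddCircle (1 : ℝ)) :
    IsProgressive (fun y => y + (α : AddCircle (1 : ℝ))) k
      (Measure.map
        (fun β : AddCircle (1 : ℝ) => fun i : Fin (k + 1) => a + (i : ℕ) • β)
        volume) := by
  intro U hU hpos
  have hφ : Continuous
      (fun β : AddCircle (1 : ℝ) => fun i : Fin (k + 1) => a + (i : ℕ) • β) := by fun_prop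
  have hT (n : ℕ) : (fun y => y + (α : AddCircle (1 : ℝ)))^[n] =
      fun y => y + n • (α : AddCircle (1 : ℝ)) := add_right_iterate _ n
  have hA : IsOpen {x : Fin (k + 1) → AddCircle (1 : ℝ) |
      ∀ i : Fin (k + 1), 1 ≤ (i : ℕ) → x i ∈ U i} := by
    simp only [Set.ofPred_forall]
    exact isOpen_iInter_of_finite fun i => isOpen_iInter_of_finite fun hi =>
      (hU i hi (by lia)).preimage (continuous_apply i)
  have hB (n : ℕ) : IsOpen {x : Fin (k + 1) → AddCircle (1 : ℝ) |
      ∀ i : Fin (k + 1), (i : ℕ) < k →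
        (fun y => y + (α : AddCircle (1 : ℝ)))^[n] (x i) ∈ U ((i : ℕ) + 1)} := by
    simp only [Set.ofPred_forall, hT]
    exact isOpen_iInter_of_finite fun i => isOpen_iInter_of_finite fun hi =>
      (hU (i + 1) (by lia) (by lia)).preimage ((continuous_apply i).add continuous_const)
  rw [Measure.map_apply hφ.measurable hA.measurableSet] at hpos
  obtain ⟨β₀, hβ₀⟩ := nonempty_of_measure_ne_zero hpos.ne'
  have hN : IsOpen {γ : AddCircle (1 : ℝ) |
      ∀ i : Fin (k + 1), (i : ℕ) < k → a + (i : ℕ) • β₀ + γ ∈ U ((i : ℕ) + 1)} := by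
    simp only [Set.ofPred_forall]
    exact isOpen_iInter_of_finite fun i => isOpen_iInter_of_finite fun hi =>
      (hU (i + 1) (by lia) (by lia)).preimage (continuous_const.add continuous_id)
  have hmem : β₀ ∈ {γ : AddCircle (1 : ℝ) |
      ∀ i : Fin (k + 1), (i : ℕ) < k → a + (i : ℕ) • β₀ + γ ∈ U ((i : ℕ) + 1)} := by
    intro i hi
    have h := hβ₀ ⟨i + 1, by lia⟩ (by simp)
    simpa [succ_nsmul, add_assoc] using h
  have hfreq := (mapClusterPt_nsmul_of_irrational hα β₀).frequently (hN.mem_nhds hmem)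
  refine (Nat.frequently_atTop_iff_infinite.1 hfreq).mono fun n hn => ?_
  have hopen := hA.inter (hB n)
  simp only [Set.mem_ofPred_eq]
  rw [Measure.map_apply hφ.measurable hopen.measurableSet]
  refine (hopen.preimage hφ).measure_pos _ ⟨β₀, hβ₀, fun i hi => ?_⟩
  rw [hT]
  exact hn i hi
end

section
/- Let Φ = (Φ_N)_{N∈ℕ} be a Følner sequence in ℕ, let c ∈ ℕ with c ≥ 1, and let j be an integer with 0 ≤ j ≤ c−1. Then (1/|Φ_N|)·|{n ∈ Φ_N : n ≡ j (mod c)}| → 1/c as N → ∞. -/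
/-!
Write `a i` for the number of elements of a finite set `F ⊆ ℕ` lying in the class `i : ZMod c`, and
let `D = |(F + 1) \ F|`. Translating by `1` moves class `i` into class `i + 1`, losing at most `D`
points, so `a i ≤ a (i + 1) + D`. Going around the cycle `ZMod c`, any two class counts differ by at
most `c * D` (`card_class_le`). Since the `c` counts add up to `|F|`, each satisfies
`|c * a j - |F|| ≤ c * c * D` (`abs_card_class_sub_le`). Along a Følner sequence `D / |F| → 0`, and
dividing by `c * |F|` gives the limit `1 / c`.
-/

open Filter Topology

/-- A Følner sequence in `ℕ`. -/
def IsFolner (Φ : ℕ → Finset ℕ) : Prop :=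
  (∀ N, (Φ N).Nonempty) ∧
    Tendsto (fun N => (((Φ N).image (· + 1) ∩ Φ N).card : ℝ) / (Φ N).card)
      atTop (𝓝 1)

/-- Number of elements of `F` in the residue class `i` modulo `c`. -/
def classCard (F : Finset ℕ) (c : ℕ) (i : ZMod c) : ℕ :=
  (F.filter fun n : ℕ => (n : ZMod c) = i).card

lemma card_class_le_succ (F : Finset ℕ) (c : ℕ) (i : ZMod c) :
    classCard F c i ≤ classCard F c (i + 1) + (F.image (· + 1) \ F).card := by
  unfold classCard
  rw [← Finset.card_image_of_injective (F.filter fun n : ℕ => (n : ZMod c) = i)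
    (add_left_injective 1)]
  refine (Finset.card_le_card ?_).trans (Finset.card_union_le _ _)
  intro m hm
  simp only [Finset.mem_image, Finset.mem_filter] at hm
  obtain ⟨n, ⟨hn, hi⟩, rfl⟩ := hm
  by_cases h : n + 1 ∈ F
  · exact Finset.mem_union_left _ (by simp [h, hi])
  · exact Finset.mem_union_right _ (by simp [h, hn])

lemma card_class_le_add (F : Finset ℕ) (c : ℕ) (i : ZMod c) (k : ℕ) :
    classCard F c i ≤ classCard F c (i + k) + k * (F.image (· + 1) \ F).card := by
  induction k with
  | zero => simp
  | succ k ih =>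
    have h := card_class_le_succ F c (i + k)
    rw [add_assoc] at h
    push_cast
    linarith

lemma card_class_le (F : Finset ℕ) (c : ℕ) [NeZero c] (i j : ZMod c) :
    classCard F c i ≤ classCard F c j + c * (F.image (· + 1) \ F).card := by
  have h := card_class_le_add F c i (j - i).val
  rw [ZMod.natCast_zmod_val, add_sub_cancel] at h
  have := Nat.mul_le_mul_right (F.image (· + 1) \ F).card (ZMod.val_lt (j - i)).le
  linarith

lemma sum_card_class (F : Finset ℕ) (c : ℕ) [NeZero c] :
    ∑ i : ZMod c, classCard F c i = F.card :=
  (Finset.card_eq_sum_card_fiberwise (f := fun n : ℕ => (n : ZMod c)) (by simp)).symm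

lemma abs_card_class_sub_le (F : Finset ℕ) (c : ℕ) [NeZero c] (j : ZMod c) :
    |(c : ℝ) * classCard F c j - F.card| ≤ c * c * (F.image (· + 1) \ F).card := by
  have h1 : F.card ≤ c * (classCard F c j + c * (F.image (· + 1) \ F).card) := by
    rw [← sum_card_class F c]
    simpa [ZMod.card] using
      Finset.sum_le_card_nsmul Finset.univ _ _ fun i _ => card_class_le F c i j
  have h2 : c * classCard F c j ≤ F.card + c * (c * (F.image (· + 1) \ F).card) := by
    rw [← sum_card_class F c]
    simpa [ZMod.card, Finset.sum_add_distrib] using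
      Finset.card_nsmul_le_sum Finset.univ _ _ fun i _ => card_class_le F c j i
  have h1' : (F.card : ℝ) ≤ c * (classCard F c j + c * (F.image (· + 1) \ F).card) := by
    exact_mod_cast h1
  have h2' : (c : ℝ) * classCard F c j ≤ F.card + c * (c * (F.image (· + 1) \ F).card) := by
    exact_mod_cast h2
  rw [abs_le]
  constructor <;> linarith

theorem folner_residue_classes
    (Φ : ℕ → Finset ℕ) (hΦ : IsFolner Φ) (c : ℕ) (hc : 1 ≤ c)
    (j : ℕ) (hj : j ≤ c - 1) :
    Tendsto
      (fun N => (((Φ N).filter fun n => n % c = j).card : ℝ) / (Φ N).card)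
      atTop (𝓝 (1 / (c : ℝ))) := by
  obtain ⟨hne, hlim⟩ := hΦ
  haveI : NeZero c := ⟨by omega⟩
  have hcpos : (0 : ℝ) < c := by exact_mod_cast hc
  have hfilter (N : ℕ) : ((Φ N).filter fun n => n % c = j).card = classCard (Φ N) c j := by
    unfold classCard
    congr 1
    refine Finset.filter_congr fun n _ => ?_
    rw [ZMod.natCast_eq_natCast_iff', Nat.mod_eq_of_lt (show j < c by omega)]
  have hbound : Tendsto (fun N =>
      (c : ℝ) * (1 - (((Φ N).image (· + 1) ∩ Φ N).card : ℝ) / (Φ N).card)) atTop (𝓝 0) := by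
    simpa using (hlim.const_sub 1).const_mul (c : ℝ)
  rw [tendsto_iff_norm_sub_tendsto_zero]
  refine squeeze_zero (fun _ => norm_nonneg _) (fun N => ?_) hbound
  have hpos : (0 : ℝ) < (Φ N).card := by exact_mod_cast (hne N).card_pos
  have hD : (((Φ N).image (· + 1) \ Φ N).card : ℝ) =
      (Φ N).card - ((Φ N).image (· + 1) ∩ Φ N).card := by
    have h := Finset.card_sdiff_add_card_inter ((Φ N).image (· + 1)) (Φ N)
    rw [Finset.card_image_of_injective _ (add_left_injective 1)] at h
    rw [eq_sub_iff_add_eq]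
    exact_mod_cast h
  have h := abs_card_class_sub_le (Φ N) c j
  rw [hD] at h
  rw [hfilter, Real.norm_eq_abs, div_sub_div _ _ hpos.ne' hcpos.ne', abs_div,
    abs_of_pos (mul_pos hpos hcpos), div_le_iff₀ (mul_pos hpos hcpos)]
  rw [mul_comm (classCard (Φ N) c j : ℝ), mul_one]
  refine h.trans (le_of_eq ?_)
  field_simp
end

section
/- Let 𝕋 = ℝ/ℤ, let α ∈ ℝ be irrational, and let H = {(x, 2x) : x ∈ 𝕋} ⊆ 𝕋². Let S : 𝕋² → 𝕋² be the map S(x,y) = (x+2α, y+α) (mod 1). Then H ∩ S^{-n}H = ∅ for every n ∈ ℕ with n ≥ 1. Consequently, the Haar probability measure ν on the subtorus H, which is invariant under the map (x,y) ↦ (x+α, y+2α), satisfies ν(H ∩ S^{-n}H) = 0 for all n ≥ 1, showing that the product-set assumption cannot be dropped in the extension of Furstenberg's multiple recurrence theorem to measures invariant under a different product transformation. -/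
/-!
A point of `H ∩ S⁻ⁿH` has the form `(x, 2x)` with `2(x + 2nα) = 2x + nα`, so `3nα = 0` in `ℝ/ℤ`;
for `n ≥ 1` this contradicts the irrationality of `α`. Invariance of `ν` holds because
`x ↦ (x, 2x)` intertwines the rotation by `α` on the circle with `R`, and the rotation preserves
Lebesgue measure.
-/

open MeasureTheory Filter Topology

theorem straus_type_counterexample
    (α : ℝ) (hα : Irrational α)
    (H : Set (AddCircle (1 : ℝ) × AddCircle (1 : ℝ)))
    (hH : H = Set.range fun x : AddCircle (1 : ℝ) => (x, 2 • x))
    (S R : AddCircle (1 : ℝ) × AddCircle (1 : ℝ) → AddCircle (1 : ℝ) × AddCircle (1 : ℝ))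
    (hS : S = fun p => (p.1 + 2 • (α : AddCircle (1 : ℝ)), p.2 + (α : AddCircle (1 : ℝ))))
    (hR : R = fun p => (p.1 + (α : AddCircle (1 : ℝ)), p.2 + 2 • (α : AddCircle (1 : ℝ))))
    (ν : Measure (AddCircle (1 : ℝ) × AddCircle (1 : ℝ)))
    (hν : ν = Measure.map (fun x : AddCircle (1 : ℝ) => (x, 2 • x)) volume) :
    (∀ n : ℕ, 1 ≤ n → H ∩ S^[n] ⁻¹' H = ∅) ∧
    Measure.map R ν = ν ∧
    ∀ n : ℕ, 1 ≤ n → ν (H ∩ S^[n] ⁻¹' H) = 0 := by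
  have hempty : ∀ n : ℕ, 1 ≤ n → H ∩ S^[n] ⁻¹' H = ∅ := by
    intro n hn
    have hiter : ∀ (m : ℕ) (p : AddCircle (1 : ℝ) × AddCircle (1 : ℝ)),
        S^[m] p = (p.1 + m • (2 • (α : AddCircle (1 : ℝ))),
          p.2 + m • (α : AddCircle (1 : ℝ))) := by
      intro m p
      induction m with
      | zero => simp
      | succ k ih =>
        rw [Function.iterate_succ_apply', ih, hS]
        simp only [succ_nsmul, add_assoc]
    rw [Set.eq_empty_iff_forall_notMem]
    rintro p ⟨h1, h2⟩
    rw [Set.mem_preimage, hiter] at h2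
    rw [hH] at h1 h2
    obtain ⟨x, rfl⟩ := h1
    obtain ⟨y, hy⟩ := h2
    simp only [Prod.mk.injEq] at hy
    obtain ⟨rfl, hy⟩ := hy
    have h3 : (3 * n) • (α : AddCircle (1 : ℝ)) = 0 := by
      have h4 : (3 * n) • (α : AddCircle (1 : ℝ))
          = 2 • (x + n • (2 • (α : AddCircle (1 : ℝ))))
            - (2 • x + n • (α : AddCircle (1 : ℝ))) := by
        module
      rw [h4, hy, sub_self]
    rw [← AddCircle.coe_nsmul, AddCircle.coe_eq_zero_iff] at h3
    obtain ⟨k, hk⟩ := h3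
    have hirr : Irrational (((3 * n : ℕ) : ℝ) * α) := hα.natCast_mul (by omega)
    apply hirr.ne_int k
    simpa using hk.symm
  refine ⟨hempty, ?_, fun n hn => by rw [hempty n hn, measure_empty]⟩
  have hφ : Measurable fun x : AddCircle (1 : ℝ) => (x, 2 • x) :=
    Continuous.measurable (by fun_prop)
  have hRm : Measurable R := by
    rw [hR]
    exact Continuous.measurable (by fun_prop)
  have hcomm : (R ∘ fun x : AddCircle (1 : ℝ) => (x, 2 • x))
      = (fun x : AddCircle (1 : ℝ) => (x, 2 • x)) ∘ fun x => x + (α : AddCircle (1 : ℝ)) := by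
    rw [hR]
    funext x
    simp
  rw [hν, Measure.map_map hRm hφ, hcomm, ← Measure.map_map hφ (measurable_add_const _),
    map_add_right_eq_self]
end

section
/- Let (X,T) be a uniquely ergodic topological system with unique T-invariant Borel probability measure m, and let i ∈ ℕ with i ≥ 1. Then every Borel probability measure ρ on X that is invariant under T^i satisfies ρ(A) ≤ i·m(A) for every Borel set A ⊆ X. -/
/-!
Averaging `ρ` along the orbit of `T` gives the measure `(1/i) ∑_{j<i} (T^j)_* ρ`. Since `ρ` is
`T^i`-invariant, pushing forward by `T` only permutes the summands cyclically, so this average is a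
`T`-invariant probability measure and equals `m` by unique ergodicity. The `j = 0` term of
`i • m = ∑_{j<i} (T^j)_* ρ` is `ρ`, which gives the bound.
-/

open MeasureTheory Filter Topology

theorem power_invariant_measure_le
    {X : Type*} [MetricSpace X] [CompactSpace X] [MeasurableSpace X] [BorelSpace X]
    (T : X → X) (hT : IsHomeomorph T)
    (m : Measure X) [IsProbabilityMeasure m] (hm : Measure.map T m = m)
    (huniq : ∀ m' : Measure X, IsProbabilityMeasure m' → Measure.map T m' = m' → m' = m)
    (i : ℕ) (hi : 1 ≤ i)
    (ρ : Measure X) [IsProbabilityMeasure ρ] (hρ : Measure.map T^[i] ρ = ρ)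
    (A : Set X) (hA : MeasurableSet A) :
    ρ A ≤ (i : ENNReal) * m A := by
  have hTm : Measurable T := hT.continuous.measurable
  have hi0 : (i : ENNReal) ≠ 0 := by
    simp only [ne_eq, Nat.cast_eq_zero]
    omega
  have hit : (i : ENNReal) ≠ ⊤ := ENNReal.natCast_ne_top i
  set S : Measure X := ∑ j ∈ Finset.range i, Measure.map T^[j] ρ with hS
  have hSapp (B : Set X) : S B = ∑ j ∈ Finset.range i, Measure.map T^[j] ρ B := by
    rw [hS, Measure.finsetSum_apply]
  have hprob : IsProbabilityMeasure ((i : ENNReal)⁻¹ • S) := by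
    constructor
    have hone (j : ℕ) : Measure.map T^[j] ρ Set.univ = 1 := by
      rw [Measure.map_apply (hTm.iterate j) MeasurableSet.univ, Set.preimage_univ, measure_univ]
    simp [hSapp, hone, ENNReal.inv_mul_cancel hi0 hit]
  have hinv : Measure.map T S = S := by
    ext B hB
    have hstep (j : ℕ) : Measure.map T^[j] ρ (T ⁻¹' B) = Measure.map T^[j + 1] ρ B := by
      rw [Measure.map_apply (hTm.iterate j) (hTm hB), Measure.map_apply (hTm.iterate (j + 1)) hB,
        Function.iterate_succ', Set.preimage_comp]
    rw [Measure.map_apply hTm hB, hSapp, hSapp, Finset.sum_congr rfl fun j _ => hstep j]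
    -- Both sums extend to the sum over `0, …, i`; the two extra terms agree because
    -- `(T^i)_* ρ = ρ = (T^0)_* ρ`.
    have h := (Finset.sum_range_succ' (fun j => Measure.map T^[j] ρ B) i).symm.trans
      (Finset.sum_range_succ (fun j => Measure.map T^[j] ρ B) i)
    rw [hρ, Function.iterate_zero, Measure.map_id] at h
    exact (ENNReal.add_left_inj (measure_ne_top ρ B)).1 h
  have heq := huniq _ hprob (by rw [Measure.map_smul, hinv])
  have hSA : (i : ENNReal) * m A = S A := by
    rw [← heq, Measure.smul_apply, smul_eq_mul, ← mul_assoc, ENNReal.mul_inv_cancel hi0 hit,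
      one_mul]
  rw [hSA, hSapp]
  calc ρ A = Measure.map T^[0] ρ A := by rw [Function.iterate_zero, Measure.map_id]
    _ ≤ _ := Finset.single_le_sum (f := fun j => Measure.map T^[j] ρ A) (fun _ _ => zero_le)
      (Finset.mem_range.2 hi)
end
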